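/- arXiv:1112.2133 — 5 statements merged into one kernel-verified Lean document; each statement's English description precedes it below -/
import Mathlib

section
/- Wigner's theorem: Let H be a complex Hilbert space and let φ : ℙH → ℙH be a bijection of the projective space of H that preserves transition probabilities, i.e. p(φ(L₁), φ(L₂)) = p(L₁, L₂) for all lines L₁, L₂ ∈ ℙH. Then there exists a map S : H → H which is either a unitary operator or an antiunitary operator such that φ(ℂ·ψ) = ℂ·S(ψ) for every nonzero vector ψ ∈ H. -/
open scoped InnerProductSpace

/-- The transition probability between two states (lines) in projective Hilbert space:
`p(L₁, L₂) = |⟨ψ₁, ψ₂⟩|²` for unit vectors `ψᵢ ∈ Lᵢ`. -/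
noncomputable def transProb {H : Type*} [NormedAddCommGroup H] [InnerProductSpace ℂ H]
    (L₁ L₂ : Projectivization ℂ H) : ℝ :=
  ‖(⟪L₁.rep, L₂.rep⟫_ℂ)‖ ^ 2 / (‖L₁.rep‖ ^ 2 * ‖L₂.rep‖ ^ 2)

/-- `S : H → H` is a unitary operator. -/
def IsUnitaryOp {H : Type*} [NormedAddCommGroup H] [InnerProductSpace ℂ H]
    (S : H → H) : Prop :=
  Function.Bijective S ∧
    (∀ ψ₁ ψ₂, S (ψ₁ + ψ₂) = S ψ₁ + S ψ₂) ∧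
    (∀ (c : ℂ) (ψ : H), S (c • ψ) = c • S ψ) ∧
    (∀ ψ₁ ψ₂, (⟪S ψ₁, S ψ₂⟫_ℂ) = ⟪ψ₁, ψ₂⟫_ℂ)

/-- `S : H → H` is an antiunitary operator: a bijective ℝ-linear map which is
conjugate-linear and conjugates inner products. -/
def IsAntiunitaryOp {H : Type*} [NormedAddCommGroup H] [InnerProductSpace ℂ H]
    (S : H → H) : Prop :=
  Function.Bijective S ∧
    (∀ ψ₁ ψ₂, S (ψ₁ + ψ₂) = S ψ₁ + S ψ₂) ∧
    (∀ (c : ℂ) (ψ : H), S (c • ψ) = (starRingEnd ℂ c) • S ψ) ∧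
    (∀ ψ₁ ψ₂, (⟪S ψ₁, S ψ₂⟫_ℂ) = starRingEnd ℂ (⟪ψ₁, ψ₂⟫_ℂ))

section WignerAux

theorem wigner_aux_transProb_mk {H : Type*} [NormedAddCommGroup H] [InnerProductSpace ℂ H]
    (v w : H) (hv : v ≠ 0) (hw : w ≠ 0) :
    transProb (Projectivization.mk ℂ v hv) (Projectivization.mk ℂ w hw)
      = ‖(⟪v, w⟫_ℂ)‖ ^ 2 / (‖v‖ ^ 2 * ‖w‖ ^ 2) := by
  obtain ⟨a, ha⟩ := Projectivization.exists_smul_eq_mk_rep ℂ v hv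
  obtain ⟨b, hb⟩ := Projectivization.exists_smul_eq_mk_rep ℂ w hw
  unfold transProb
  rw [← ha, ← hb]
  simp only [Units.smul_def, inner_smul_left, inner_smul_right, norm_mul, norm_smul,
    RCLike.norm_conj]
  have h1 : ‖(a : ℂ)‖ ≠ 0 := norm_ne_zero_iff.2 a.ne_zero
  have h2 : ‖(b : ℂ)‖ ≠ 0 := norm_ne_zero_iff.2 b.ne_zero
  have h3 : ‖v‖ ≠ 0 := norm_ne_zero_iff.2 hv
  have h4 : ‖w‖ ≠ 0 := norm_ne_zero_iff.2 hw
  field_simp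

/-- equality in Cauchy-Schwarz, real version -/
theorem wigner_aux_eq {H : Type*} [NormedAddCommGroup H] [InnerProductSpace ℂ H]
    (u v : H) (h : ‖u‖ = ‖v‖) (h2 : (⟪u, v⟫_ℂ).re = ‖v‖ ^ 2) : u = v := by
  have := norm_sub_sq (𝕜 := ℂ) u v
  simp only [RCLike.re_to_complex] at this
  rw [h2, h] at this
  have h0 : ‖u - v‖ ^ 2 = 0 := by rw [this]; ring
  exact sub_eq_zero.1 (norm_eq_zero.1 (pow_eq_zero_iff (two_ne_zero) |>.1 h0))

theorem wigner_aux_normSq_one_add (z : ℂ) : ‖1 + z‖ ^ 2 = 1 + 2 * z.re + ‖z‖ ^ 2 := by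
  rw [← Complex.normSq_eq_norm_sq, ← Complex.normSq_eq_norm_sq, Complex.normSq_apply,
    Complex.normSq_apply]
  simp; ring

theorem wigner_aux_core {K H : Type*} [NormedAddCommGroup H] [InnerProductSpace ℂ H]
    [NormedAddCommGroup K] [InnerProductSpace ℂ K] (f : K → H)
    (hf : ∀ x y, ‖1 + (⟪f x, f y⟫_ℂ)‖ = ‖1 + (⟪x, y⟫_ℂ)‖) :
    (∀ x y, f (x + y) = f x + f y) ∧
    (((∀ (c : ℂ) x, f (c • x) = c • f x) ∧ ∀ x y, (⟪f x, f y⟫_ℂ) = ⟪x, y⟫_ℂ) ∨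
     ((∀ (c : ℂ) x, f (c • x) = (starRingEnd ℂ c) • f x) ∧
        ∀ x y, (⟪f x, f y⟫_ℂ) = starRingEnd ℂ (⟪x, y⟫_ℂ))) := by
  have hn : ∀ x, ‖f x‖ = ‖x‖ := by
    intro x
    have h := hf x x
    rw [inner_self_eq_norm_sq_to_K, inner_self_eq_norm_sq_to_K] at h
    have e : ∀ t : ℝ, ‖(1 + ((t : ℝ) : ℂ) ^ 2)‖ = 1 + t ^ 2 := by
      intro t
      have : (1 + ((t : ℝ) : ℂ) ^ 2) = ((1 + t ^ 2 : ℝ) : ℂ) := by push_cast; ring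
      rw [this, Complex.norm_real, Real.norm_of_nonneg (by positivity)]
    have h' : 1 + ‖f x‖ ^ 2 = 1 + ‖x‖ ^ 2 := by
      rw [← e, ← e]; exact h
    have : ‖f x‖ ^ 2 = ‖x‖ ^ 2 := by linarith
    exact (pow_left_inj₀ (norm_nonneg _) (norm_nonneg _) two_ne_zero).1 this
  have hre0 : ∀ x y, 2 * (⟪f x, f y⟫_ℂ).re + ‖(⟪f x, f y⟫_ℂ)‖ ^ 2
      = 2 * (⟪x, y⟫_ℂ).re + ‖(⟪x, y⟫_ℂ)‖ ^ 2 := by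
    intro x y
    have h := congrArg (fun t => t ^ 2) (hf x y)
    simp only [wigner_aux_normSq_one_add] at h
    linarith
  have hpos : ∀ (t : ℝ), 0 ≤ t → ∀ x, f ((t : ℂ) • x) = (t : ℂ) • f x := by
    intro t ht x
    have h := hre0 ((t : ℂ) • x) x
    have hb : ‖(⟪f ((t : ℂ) • x), f x⟫_ℂ)‖ ≤ t * ‖x‖ ^ 2 := by
      refine (norm_inner_le_norm _ _).trans ?_
      rw [hn, hn, norm_smul, Complex.norm_real, Real.norm_of_nonneg ht]
      exact le_of_eq (by ring)
    have hr : (⟪(t : ℂ) • x, x⟫_ℂ) = ((t * ‖x‖ ^ 2 : ℝ) : ℂ) := by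
      rw [inner_smul_left, inner_self_eq_norm_sq_to_K]; simp
    rw [hr, Complex.ofReal_re, Complex.norm_real, Real.norm_of_nonneg (by positivity)] at h
    have hle := Complex.re_le_norm (⟪f ((t : ℂ) • x), f x⟫_ℂ)
    have hre : (⟪f ((t : ℂ) • x), f x⟫_ℂ).re = t * ‖x‖ ^ 2 := by
      have := pow_le_pow_left₀ (norm_nonneg _) hb 2
      linarith
    apply wigner_aux_eq
    · rw [hn, norm_smul, norm_smul, hn]
    · rw [inner_smul_right, Complex.re_ofReal_mul, hre, norm_smul, Complex.norm_real, hn,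
        Real.norm_of_nonneg ht]
      ring
  have hsep : ∀ x y, (⟪f x, f y⟫_ℂ).re = (⟪x, y⟫_ℂ).re ∧
      ‖(⟪f x, f y⟫_ℂ)‖ ^ 2 = ‖(⟪x, y⟫_ℂ)‖ ^ 2 := by
    intro x y
    have h1 := hre0 x y
    have h2 := hre0 (((2 : ℝ) : ℂ) • x) y
    rw [hpos 2 (by norm_num), inner_smul_left, inner_smul_left, Complex.conj_ofReal,
      Complex.re_ofReal_mul, Complex.re_ofReal_mul, norm_mul, norm_mul, Complex.norm_real,
      Real.norm_of_nonneg (by norm_num : (0:ℝ) ≤ 2)] at h2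
    constructor <;> nlinarith
  have hadd : ∀ x y, f (x + y) = f x + f y := by
    intro x y
    have hns : ‖f x + f y‖ ^ 2 = ‖x + y‖ ^ 2 := by
      rw [norm_add_sq (𝕜 := ℂ), norm_add_sq (𝕜 := ℂ), hn, hn]
      simp only [RCLike.re_to_complex, (hsep x y).1]
    have hns' := (pow_left_inj₀ (norm_nonneg _) (norm_nonneg _) two_ne_zero).1 hns
    apply wigner_aux_eq
    · rw [hn, hns']
    · rw [hns', inner_add_right, Complex.add_re, (hsep _ _).1, (hsep _ _).1, ← Complex.add_re,
        ← inner_add_right, inner_self_eq_norm_sq_to_K]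
      norm_cast
  have hf0 : f 0 = 0 := by simpa using hn 0
  have hneg : ∀ x, f (-x) = - f x := by
    intro x
    have := hadd x (-x)
    rw [add_neg_cancel, hf0] at this
    exact (neg_eq_of_add_eq_zero_right this.symm).symm
  have hreal : ∀ (t : ℝ) x, f ((t : ℂ) • x) = (t : ℂ) • f x := by
    intro t x
    rcases le_total 0 t with h | h
    · exact hpos t h x
    · have := hpos (-t) (by linarith) x
      rw [Complex.ofReal_neg, neg_smul, neg_smul, hneg] at this
      exact neg_injective this
  have hI : ∀ x, f (Complex.I • x) = Complex.I • f x ∨ f (Complex.I • x) = -(Complex.I • f x) := by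
    intro x
    obtain ⟨h1, h2⟩ := hsep (Complex.I • x) x
    have hr : (⟪Complex.I • x, x⟫_ℂ) = -Complex.I * ((‖x‖ ^ 2 : ℝ) : ℂ) := by
      rw [inner_smul_left, inner_self_eq_norm_sq_to_K]; simp
    have e1 : (-Complex.I * ((‖x‖ ^ 2 : ℝ) : ℂ)).re = 0 := by
      rw [Complex.mul_re, Complex.ofReal_re, Complex.ofReal_im]; simp
    have e2 : ‖(-Complex.I * ((‖x‖ ^ 2 : ℝ) : ℂ))‖ = ‖x‖ ^ 2 := by
      rw [norm_mul, Complex.norm_real, Real.norm_of_nonneg (by positivity)]; simp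
    rw [hr, e1] at h1
    rw [hr, e2, ← Complex.normSq_eq_norm_sq, Complex.normSq_apply, h1] at h2
    have h3 : (⟪f (Complex.I • x), f x⟫_ℂ).im = ‖x‖ ^ 2 ∨
        (⟪f (Complex.I • x), f x⟫_ℂ).im = -‖x‖ ^ 2 := by
      apply sq_eq_sq_iff_eq_or_eq_neg.1; linarith
    rcases h3 with h3 | h3
    · right
      apply wigner_aux_eq
      · rw [hn, norm_neg, norm_smul, norm_smul, hn]
      · rw [inner_neg_right, inner_smul_right, norm_neg, norm_smul, hn]
        simp [h3]
    · left
      apply wigner_aux_eq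
      · rw [hn, norm_smul, norm_smul, hn]
      · rw [inner_smul_right, norm_smul, hn]
        simp [h3]
  have hdec : ∀ (c : ℂ) x, f (c • x) = (c.re : ℂ) • f x + (c.im : ℂ) • f (Complex.I • x) := by
    intro c x
    rw [← hreal, ← hreal, ← hadd, smul_smul, ← add_smul, Complex.re_add_im]
  have him : ∀ z : ℂ, (Complex.I * z).re = - z.im := by intro z; simp
  refine ⟨hadd, ?_⟩
  by_cases hA : ∀ x, f (Complex.I • x) = Complex.I • f x
  · left
    have hs : ∀ (c : ℂ) x, f (c • x) = c • f x := by
      intro c x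
      rw [hdec, hA, smul_smul, ← add_smul, Complex.re_add_im]
    refine ⟨hs, fun x y => Complex.ext (hsep x y).1 ?_⟩
    have := (hsep x (Complex.I • y)).1
    rw [hs, inner_smul_right, inner_smul_right, him, him] at this
    linarith
  · right
    push Not at hA
    obtain ⟨a, ha⟩ := hA
    have ha' := (hI a).resolve_left ha
    have hB : ∀ x, f (Complex.I • x) = -(Complex.I • f x) := by
      intro x
      rcases hI x with h | h
      · have hxa : f (Complex.I • (x + a)) = Complex.I • f x - Complex.I • f a := by
          rw [smul_add, hadd, h, ha', sub_eq_add_neg]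
        rcases hI (x + a) with h' | h'
        · exfalso
          rw [hxa, hadd, smul_add, sub_eq_add_neg] at h'
          exact ha (ha'.trans (add_left_cancel h'))
        · rw [hxa, hadd, smul_add, neg_add, sub_eq_add_neg] at h'
          exact h.trans (add_right_cancel h')
      · exact h
    have hs : ∀ (c : ℂ) x, f (c • x) = (starRingEnd ℂ c) • f x := by
      intro c x
      rw [hdec, hB, smul_neg, smul_smul, ← neg_smul, ← add_smul]
      congr 1
      apply Complex.ext <;> simp
    refine ⟨hs, fun x y => Complex.ext (by rw [Complex.conj_re]; exact (hsep x y).1) ?_⟩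
    have := (hsep x (Complex.I • y)).1
    rw [hs, inner_smul_right, inner_smul_right, him, Complex.conj_I, neg_mul, Complex.neg_re,
      him] at this
    rw [Complex.conj_im]
    linarith

theorem wigner_aux_mk_eq {H : Type*} [NormedAddCommGroup H] [InnerProductSpace ℂ H]
    (v w : H) (hv : v ≠ 0) (hw : w ≠ 0) (h : ‖(⟪v, w⟫_ℂ)‖ = ‖v‖ * ‖w‖) :
    Projectivization.mk ℂ v hv = Projectivization.mk ℂ w hw := by
  obtain ⟨r, hr, h⟩ := (norm_inner_eq_norm_iff hv hw).1 h
  refine ((Projectivization.mk_eq_mk_iff' ℂ w v hw hv).2 ⟨r, h.symm⟩).symm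

/-- Assembling the operator. -/
theorem wigner_aux_build {H : Type*} [NormedAddCommGroup H] [InnerProductSpace ℂ H]
    (φ : Projectivization ℂ H → Projectivization ℂ H) (hφ : Function.Bijective φ)
    (hp : ∀ L₁ L₂ : Projectivization ℂ H, transProb (φ L₁) (φ L₂) = transProb L₁ L₂)
    (e e' : H) (he : ‖e‖ = 1) (he' : ‖e'‖ = 1)
    (f : (ℂ ∙ e)ᗮ → H) (hfe : ∀ x, (⟪e', f x⟫_ℂ) = 0)
    (hline : ∀ x : (ℂ ∙ e)ᗮ, ∃ (h1 : e + (x : H) ≠ 0) (h2 : e' + f x ≠ 0),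
      φ (Projectivization.mk ℂ _ h1) = Projectivization.mk ℂ _ h2)
    (σ : ℂ →+* ℂ) (hσ : ∀ c, σ (σ c) = c) (hσr : ∀ r : ℝ, σ (RCLike.ofReal r : ℂ) = RCLike.ofReal r)
    (hσc : ∀ c, σ (starRingEnd ℂ c) = starRingEnd ℂ (σ c))
    (hadd : ∀ x y, f (x + y) = f x + f y)
    (hs : ∀ (c : ℂ) x, f (c • x) = σ c • f x)
    (hi : ∀ x y, (⟪f x, f y⟫_ℂ) = σ (⟪x, y⟫_ℂ)) :
    ∃ S : H → H, (Function.Bijective S ∧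
      (∀ ψ₁ ψ₂, S (ψ₁ + ψ₂) = S ψ₁ + S ψ₂) ∧
      (∀ (c : ℂ) (ψ : H), S (c • ψ) = σ c • S ψ) ∧
      (∀ ψ₁ ψ₂, (⟪S ψ₁, S ψ₂⟫_ℂ) = σ (⟪ψ₁, ψ₂⟫_ℂ))) ∧
      ∀ (ψ : H) (hψ : ψ ≠ 0), ∃ hSψ : S ψ ≠ 0,
        φ (Projectivization.mk ℂ ψ hψ) = Projectivization.mk ℂ (S ψ) hSψ := by
  have hee : (⟪e, e⟫_ℂ) = 1 := by rw [inner_self_eq_norm_sq_to_K, he]; simp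
  have hee' : (⟪e', e'⟫_ℂ) = 1 := by rw [inner_self_eq_norm_sq_to_K, he']; simp
  have hfe' : ∀ x, (⟪f x, e'⟫_ℂ) = 0 := fun x => inner_eq_zero_symm.1 (hfe x)
  have hmem : ∀ v : H, v - (⟪e, v⟫_ℂ) • e ∈ (ℂ ∙ e)ᗮ := by
    intro v
    rw [Submodule.mem_orthogonal_singleton_iff_inner_right, inner_sub_right, inner_smul_right,
      hee, mul_one, sub_self]
  let P : H → (ℂ ∙ e)ᗮ := fun v => ⟨v - (⟪e, v⟫_ℂ) • e, hmem v⟩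
  have hPv : ∀ v, v = (⟪e, v⟫_ℂ) • e + (P v : H) := by intro v; simp [P]
  have hPadd : ∀ v w, P (v + w) = P v + P w := by
    intro v w; apply Subtype.ext
    simp only [P, Submodule.coe_add, inner_add_right, add_smul]; abel
  have hPs : ∀ (c : ℂ) v, P (c • v) = c • P v := by
    intro c v; apply Subtype.ext
    simp only [P, Submodule.coe_smul, inner_smul_right, smul_sub, mul_smul]
  have heP : ∀ x : (ℂ ∙ e)ᗮ, (⟪e, (x : H)⟫_ℂ) = 0 := fun x =>
    (Submodule.mem_orthogonal_singleton_iff_inner_right).1 x.2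
  have heP' : ∀ x : (ℂ ∙ e)ᗮ, (⟪(x : H), e⟫_ℂ) = 0 := fun x => inner_eq_zero_symm.1 (heP x)
  let S : H → H := fun v => σ (⟪e, v⟫_ℂ) • e' + f (P v)
  have hSadd : ∀ v w, S (v + w) = S v + S w := by
    intro v w
    simp only [S, hPadd, hadd, inner_add_right, map_add, add_smul]; abel
  have hSs : ∀ (c : ℂ) v, S (c • v) = σ c • S v := by
    intro c v
    simp only [S, hPs, hs, inner_smul_right, map_mul, smul_add, mul_smul]
  have hSi : ∀ v w, (⟪S v, S w⟫_ℂ) = σ (⟪v, w⟫_ℂ) := by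
    intro v w
    conv_rhs => rw [hPv v, hPv w]
    simp only [S, inner_add_left, inner_add_right, inner_smul_left, inner_smul_right, hfe, hfe',
      heP, heP', hee, hee', hi, map_add, map_mul, hσc, map_zero, map_one, Submodule.coe_inner]
  have hσn : ∀ c : ℂ, σ c = 0 → c = 0 := fun c h => by rw [← hσ c, h, map_zero]
  have hS0 : ∀ v, v ≠ 0 → S v ≠ 0 := by
    intro v hv h
    have h2 := hSi v v
    rw [h, inner_zero_left] at h2
    exact hv (inner_self_eq_zero.1 (hσn _ h2.symm))
  have hL : ∀ (ψ : H) (hψ : ψ ≠ 0), ∃ hSψ : S ψ ≠ 0,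
        φ (Projectivization.mk ℂ ψ hψ) = Projectivization.mk ℂ (S ψ) hSψ := by
    intro v hv
    refine ⟨hS0 v hv, ?_⟩
    by_cases ha : (⟪e, v⟫_ℂ) = 0
    · have hSv : S v = f (P v) := by simp [S, ha]
      have hPv' : (P v : H) = v := by simp [P, ha]
      obtain ⟨h1, h2, h3⟩ := hline (P v)
      obtain ⟨h10, h20, h30⟩ := hline 0
      have hf0 : f 0 = 0 := by simpa using hadd 0 0
      obtain ⟨y, hy0, hyL⟩ : ∃ (y : H) (hy0 : y ≠ 0),
          Projectivization.mk ℂ y hy0 = φ (Projectivization.mk ℂ v hv) :=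
        ⟨_, _, (φ (Projectivization.mk ℂ v hv)).mk_rep⟩
      have t1 := hp (Projectivization.mk ℂ v hv) (Projectivization.mk ℂ _ h10)
      have t2 := hp (Projectivization.mk ℂ v hv) (Projectivization.mk ℂ _ h1)
      rw [h30, ← hyL, wigner_aux_transProb_mk, wigner_aux_transProb_mk] at t1
      rw [h3, ← hyL, wigner_aux_transProb_mk, wigner_aux_transProb_mk] at t2
      have hve : (⟪v, e⟫_ℂ) = 0 := inner_eq_zero_symm.1 ha
      have hny : ‖y‖ ≠ 0 := norm_ne_zero_iff.2 hy0
      have hnv : ‖v‖ ≠ 0 := norm_ne_zero_iff.2 hv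
      simp only [hf0, Submodule.coe_zero, add_zero, hve, he, he', norm_zero] at t1
      have hye : (⟪y, e'⟫_ℂ) = 0 := by
        simpa [hy0, hv] using t1
      have n0 : ‖f (P v)‖ ^ 2 = ‖v‖ ^ 2 := by
        have h := hSi v v
        rw [hSv, inner_self_eq_norm_sq_to_K, inner_self_eq_norm_sq_to_K] at h
        rw [map_pow, hσr] at h
        exact_mod_cast h
      have n1 : ‖e + (P v : H)‖ ^ 2 = 1 + ‖v‖ ^ 2 := by
        rw [norm_add_sq (𝕜 := ℂ), heP, hPv', he]; simp
      have n2 : ‖e' + f (P v)‖ ^ 2 = 1 + ‖v‖ ^ 2 := by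
        rw [norm_add_sq (𝕜 := ℂ), hfe, n0, he']; simp
      rw [n1, n2, inner_add_right, inner_add_right, hye, hve, hPv', zero_add, zero_add,
        inner_self_eq_norm_sq_to_K] at t2
      have n3 : ‖(RCLike.ofReal ‖v‖ : ℂ) ^ 2‖ = ‖v‖ ^ 2 := by simp
      have t2' : ‖(⟪y, f (P v)⟫_ℂ)‖ ^ 2 / (‖y‖ ^ 2 * (1 + ‖v‖ ^ 2)) =
        (‖v‖ ^ 2) ^ 2 / (‖v‖ ^ 2 * (1 + ‖v‖ ^ 2)) := by rw [n3] at t2; exact t2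
      have n4 : (1 + ‖v‖ ^ 2) ≠ 0 := by positivity
      field_simp at t2'
      rw [← hyL]
      apply wigner_aux_mk_eq
      rw [hSv]
      refine (pow_left_inj₀ (norm_nonneg _) (by positivity) two_ne_zero).1 ?_
      rw [mul_pow, n0, t2']
      try ring
    · obtain ⟨h1, h2, h3⟩ := hline ((⟪e, v⟫_ℂ)⁻¹ • P v)
      have q1 : Projectivization.mk ℂ v hv = Projectivization.mk ℂ _ h1 := by
        rw [Projectivization.mk_eq_mk_iff']
        refine ⟨(⟪e, v⟫_ℂ), ?_⟩
        rw [Submodule.coe_smul, smul_add, smul_smul, mul_inv_cancel₀ ha, one_smul, ← hPv]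
      rw [q1, h3]
      symm
      rw [Projectivization.mk_eq_mk_iff']
      refine ⟨σ (⟪e, v⟫_ℂ), ?_⟩
      rw [hs, smul_add, smul_smul, ← map_mul, mul_inv_cancel₀ ha, map_one, one_smul]
  refine ⟨S, ⟨⟨?_, ?_⟩, hSadd, hSs, hSi⟩, hL⟩
  · intro v w h
    by_contra hne
    apply hS0 (v - w) (sub_ne_zero.2 hne)
    have := hSadd (v - w) w
    rw [sub_add_cancel, h] at this
    exact right_eq_add.1 this
  · intro w
    by_cases hw : w = 0
    · exact ⟨0, by rw [hw]; simpa using hSs 0 0⟩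
    · obtain ⟨L, hLw⟩ := hφ.2 (Projectivization.mk ℂ w hw)
      rw [← L.mk_rep] at hLw
      obtain ⟨h1, h2⟩ := hL L.rep L.rep_nonzero
      rw [h2] at hLw
      obtain ⟨a, ha⟩ := (Projectivization.mk_eq_mk_iff' ℂ _ _ _ _).1 hLw.symm
      exact ⟨σ a • L.rep, by rw [hSs, hσ, ha]⟩

end WignerAux

/-- **Wigner's theorem.** Every bijection of the projective space of a complex Hilbert
space preserving transition probabilities lifts to a unitary or antiunitary operator. -/
theorem wigner {H : Type*} [NormedAddCommGroup H] [InnerProductSpace ℂ H] [CompleteSpace H]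
    (hdim : 2 ≤ Module.rank ℂ H)
    (φ : Projectivization ℂ H → Projectivization ℂ H) (hφ : Function.Bijective φ)
    (hp : ∀ L₁ L₂ : Projectivization ℂ H, transProb (φ L₁) (φ L₂) = transProb L₁ L₂) :
    ∃ S : H → H, (IsUnitaryOp S ∨ IsAntiunitaryOp S) ∧
      ∀ (ψ : H) (hψ : ψ ≠ 0), ∃ hSψ : S ψ ≠ 0,
        φ (Projectivization.mk ℂ ψ hψ) = Projectivization.mk ℂ (S ψ) hSψ := by
  have : Nontrivial H := by
    apply rank_pos_iff_nontrivial (R := ℂ) |>.1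
    exact lt_of_lt_of_le (by norm_num) hdim
  obtain ⟨e, he⟩ := exists_norm_eq H (zero_le_one (α := ℝ))
  have he0 : e ≠ 0 := by intro h; rw [h, norm_zero] at he; exact zero_ne_one he
  obtain ⟨e', he', he0', hee'⟩ : ∃ e' : H, ‖e'‖ = 1 ∧ ∃ h : e' ≠ 0,
      φ (Projectivization.mk ℂ e he0) = Projectivization.mk ℂ e' h := by
    set L := φ (Projectivization.mk ℂ e he0)
    have hr : ‖L.rep‖ ≠ 0 := norm_ne_zero_iff.2 L.rep_nonzero
    have hc : ((‖L.rep‖⁻¹ : ℝ) : ℂ) ≠ 0 := by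
      exact_mod_cast inv_ne_zero hr
    refine ⟨((‖L.rep‖⁻¹ : ℝ) : ℂ) • L.rep, ?_, smul_ne_zero hc L.rep_nonzero, ?_⟩
    · rw [norm_smul, Complex.norm_real, norm_inv, norm_norm, inv_mul_cancel₀ hr]
    · conv_lhs => rw [← L.mk_rep]
      symm
      rw [Projectivization.mk_eq_mk_iff']
      exact ⟨_, rfl⟩
  have hee : (⟪e, e⟫_ℂ) = 1 := by rw [inner_self_eq_norm_sq_to_K, he]; simp
  have hee1 : (⟪e', e'⟫_ℂ) = 1 := by rw [inner_self_eq_norm_sq_to_K, he']; simp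
  have heP : ∀ x : (ℂ ∙ e)ᗮ, (⟪e, (x : H)⟫_ℂ) = 0 := fun x =>
    (Submodule.mem_orthogonal_singleton_iff_inner_right).1 x.2
  have heP' : ∀ x : (ℂ ∙ e)ᗮ, (⟪(x : H), e⟫_ℂ) = 0 := fun x => inner_eq_zero_symm.1 (heP x)
  have h1 : ∀ x : (ℂ ∙ e)ᗮ, e + (x : H) ≠ 0 := by
    intro x h
    have : (⟪e, e + (x : H)⟫_ℂ) = 1 := by rw [inner_add_right, heP, hee, add_zero]
    rw [h, inner_zero_right] at this
    exact zero_ne_one this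
  have hex : ∀ x : (ℂ ∙ e)ᗮ, ∃ u : H, (⟪e', u⟫_ℂ) = 0 ∧ ∃ h2 : e' + u ≠ 0,
      φ (Projectivization.mk ℂ _ (h1 x)) = Projectivization.mk ℂ _ h2 := by
    intro x
    have t := hp (Projectivization.mk ℂ e he0) (Projectivization.mk ℂ _ (h1 x))
    have hL0 := (φ (Projectivization.mk ℂ _ (h1 x))).rep_nonzero
    have hLm := (φ (Projectivization.mk ℂ _ (h1 x))).mk_rep
    set y := (φ (Projectivization.mk ℂ _ (h1 x))).rep
    rw [hee', ← hLm, wigner_aux_transProb_mk, wigner_aux_transProb_mk, inner_add_right, heP, hee]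
      at t
    have hy : (⟪e', y⟫_ℂ) ≠ 0 := by
      intro h
      have hn : ‖e + (x : H)‖ ≠ 0 := norm_ne_zero_iff.2 (h1 x)
      rw [h, he] at t
      simp at t
      exact h1 x (norm_eq_zero.1 (pow_eq_zero_iff two_ne_zero |>.1 t.symm))
    have key : e' + ((⟪e', y⟫_ℂ)⁻¹ • y - e') = (⟪e', y⟫_ℂ)⁻¹ • y := by abel
    refine ⟨(⟪e', y⟫_ℂ)⁻¹ • y - e', ?_, ?_, ?_⟩
    · rw [inner_sub_right, inner_smul_right, inv_mul_cancel₀ hy, hee1, sub_self]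
    · rw [key]; exact smul_ne_zero (inv_ne_zero hy) hL0
    · rw [← hLm]
      symm
      rw [Projectivization.mk_eq_mk_iff']
      exact ⟨_, key.symm⟩
  choose f hfe h2 hline using hex
  have hfe' : ∀ x, (⟪f x, e'⟫_ℂ) = 0 := fun x => inner_eq_zero_symm.1 (hfe x)
  have hnorm : ∀ x, ‖e' + f x‖ ^ 2 = ‖e + (x : H)‖ ^ 2 := by
    intro x
    have t := hp (Projectivization.mk ℂ e he0) (Projectivization.mk ℂ _ (h1 x))
    rw [hee', hline, wigner_aux_transProb_mk, wigner_aux_transProb_mk, inner_add_right, inner_add_right, heP,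
      hee, hfe, hee1, he, he'] at t
    simpa using t
  have hcore := wigner_aux_core f (by
    intro x y
    have t := hp (Projectivization.mk ℂ _ (h1 x)) (Projectivization.mk ℂ _ (h1 y))
    rw [hline, hline, wigner_aux_transProb_mk, wigner_aux_transProb_mk, hnorm, hnorm] at t
    have a1 : (⟪e' + f x, e' + f y⟫_ℂ) = 1 + ⟪f x, f y⟫_ℂ := by
      simp [inner_add_left, inner_add_right, hfe, hfe', hee1, -inner_self_eq_norm_sq_to_K]
    have a2 : (⟪e + (x : H), e + (y : H)⟫_ℂ) = 1 + ⟪x, y⟫_ℂ := by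
      simp [inner_add_left, inner_add_right, heP, heP', hee, -inner_self_eq_norm_sq_to_K]
    rw [a1, a2] at t
    have b1 : ‖e + (x : H)‖ ≠ 0 := norm_ne_zero_iff.2 (h1 x)
    have b2 : ‖e + (y : H)‖ ≠ 0 := norm_ne_zero_iff.2 (h1 y)
    rw [div_left_inj' (by positivity)] at t
    exact (pow_left_inj₀ (norm_nonneg _) (norm_nonneg _) two_ne_zero).1 t)
  obtain ⟨hadd, ⟨hs, hi⟩ | ⟨hs, hi⟩⟩ := hcore
  · obtain ⟨S, hS, hL⟩ := wigner_aux_build φ hφ hp e e' he he' f hfe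
      (fun x => ⟨h1 x, h2 x, hline x⟩) (RingHom.id ℂ) (fun _ => rfl) (fun _ => rfl) (fun _ => rfl) hadd hs hi
    exact ⟨S, Or.inl hS, hL⟩
  · obtain ⟨S, hS, hL⟩ := wigner_aux_build φ hφ hp e e' he he' f hfe
      (fun x => ⟨h1 x, h2 x, hline x⟩) (starRingEnd ℂ) (fun c => Complex.conj_conj c) (fun t => Complex.conj_ofReal t)
      (fun _ => rfl) hadd hs hi
    exact ⟨S, Or.inr hS, hL⟩
end

section
/- Let W be a complex Hilbert space with dim_ℂ W ≥ 2, and let S : W → W be an injective ℝ-linear map that maps every complex line into a complex line, i.e. for every ξ ∈ W there exists α ∈ ℂ with S(iξ) = α·S(ξ). Then either S(iξ) = i·S(ξ) for all ξ ∈ W (S is ℂ-linear) or S(iξ) = −i·S(ξ) for all ξ ∈ W (S is conjugate-linear). -/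
/-- A real-linear injection of a complex Hilbert space of dimension at least 2 which maps
every complex line into a complex line is complex-linear or conjugate-linear. -/
theorem real_linear_line_preserving_is_linear_or_antilinear {W : Type*}
    [NormedAddCommGroup W] [InnerProductSpace ℂ W] [CompleteSpace W]
    (hdim : 2 ≤ Module.rank ℂ W) (S : W →ₗ[ℝ] W) (hinj : Function.Injective S)
    (hline : ∀ ξ : W, ∃ α : ℂ, S (Complex.I • ξ) = α • S ξ) :
    (∀ ξ : W, S (Complex.I • ξ) = Complex.I • S ξ) ∨
    (∀ ξ : W, S (Complex.I • ξ) = (-Complex.I) • S ξ) := by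
  -- nonzero vectors have nonzero images
  have hne : ∀ ξ : W, ξ ≠ 0 → S ξ ≠ 0 := fun ξ hξ h => hξ (hinj (by rw [h, map_zero]))
  -- the multipliers agree on vectors with independent images
  have key : ∀ (ξ η : W) (α β : ℂ), S ξ ≠ 0 → (∀ c : ℂ, S η ≠ c • S ξ) →
      S (Complex.I • ξ) = α • S ξ → S (Complex.I • η) = β • S η → α = β := by
    intro ξ η α β hξ hη h1 h2
    obtain ⟨γ, h3⟩ := hline (ξ + η)
    rw [smul_add, map_add, map_add, h1, h2] at h3
    have h4 : (γ - β) • S η = (α - γ) • S ξ := by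
      rw [smul_add] at h3
      rw [sub_smul, sub_smul, sub_eq_sub_iff_add_eq_add, h3, add_comm]
    have h5 : γ = β := by
      by_contra hc
      have hc' : γ - β ≠ 0 := sub_ne_zero.mpr hc
      apply hη ((γ - β)⁻¹ * (α - γ))
      rw [mul_smul, ← h4, smul_smul, inv_mul_cancel₀ hc', one_smul]
    rw [h5, sub_self, zero_smul] at h4
    rcases smul_eq_zero.mp h4.symm with h | h
    · exact sub_eq_zero.mp h
    · exact absurd h hξ
  have hnot : ¬ Module.rank ℂ W ≤ 1 := by
    intro h
    have h21 := hdim.trans h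
    norm_num at h21
  obtain ⟨ξ₀, hξ₀⟩ : ∃ ξ : W, ξ ≠ 0 := by
    by_contra hc
    push Not at hc
    exact hnot (rank_le_one_iff.mpr ⟨0, fun v => ⟨0, by rw [hc v, smul_zero]⟩⟩)
  obtain ⟨α, hα⟩ := hline ξ₀
  have him : α.im ≠ 0 := by
    intro h
    have h1 : α = (α.re : ℂ) := Complex.ext (by simp) (by simp [h])
    have h2 : S (Complex.I • ξ₀) = S (α.re • ξ₀) := by
      rw [hα, map_smul, h1, Complex.coe_smul]
      simp
    have h3 := hinj h2
    rw [← Complex.coe_smul, ← sub_eq_zero, ← sub_smul] at h3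
    rcases smul_eq_zero.mp h3 with h4 | h4
    · have := congrArg Complex.im h4
      simp at this
    · exact hξ₀ h4
  obtain ⟨η, hη⟩ : ∃ η : W, ∀ c : ℂ, S η ≠ c • S ξ₀ := by
    by_contra hc
    push Not at hc
    apply hnot
    refine rank_le_one_iff.mpr ⟨ξ₀, fun v => ?_⟩
    obtain ⟨c, h⟩ := hc v
    let b : ℝ := c.im / α.im
    let a : ℝ := c.re - b * α.re
    have hcab : c = (a : ℂ) + (b : ℂ) * α := by
      apply Complex.ext
      · simp [a]
      · simp [b, him]
    refine ⟨(a : ℂ) + (b : ℂ) * Complex.I, hinj ?_⟩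
    rw [h, hcab, add_smul, add_smul, mul_smul, mul_smul, Complex.coe_smul, Complex.coe_smul,
      Complex.coe_smul, Complex.coe_smul, map_add, map_smul, map_smul, hα]
  have hall : ∀ ζ : W, S (Complex.I • ζ) = α • S ζ := by
    intro ζ
    obtain ⟨β, hβ⟩ := hline η
    obtain ⟨γ, hγ⟩ := hline ζ
    have hαβ := key ξ₀ η α β (hne _ hξ₀) hη hα hβ
    by_cases hz : ζ = 0
    · simp [hz]
    by_cases hin : ∃ c : ℂ, S ζ = c • S ξ₀
    · obtain ⟨c, hc⟩ := hin
      have hc0 : c ≠ 0 := by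
        rintro rfl
        exact hne _ hz (by rw [hc, zero_smul])
      have : γ = β := key ζ η γ β (hne _ hz)
        (fun d hd => hη (d * c) (by rw [hd, hc, smul_smul])) hγ hβ
      rw [hγ, this, hαβ]
    · push Not at hin
      rw [hγ, key ξ₀ ζ α γ (hne _ hξ₀) hin hα hγ]
  have hsq : α * α = -1 := by
    have h1 := hall (Complex.I • ξ₀)
    rw [hα, smul_smul, smul_smul, Complex.I_mul_I, neg_one_smul, map_neg, ← neg_one_smul ℂ] at h1
    exact (smul_left_injective ℂ (hne _ hξ₀) h1).symm
  have hf : (α - Complex.I) * (α + Complex.I) = 0 := by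
    linear_combination hsq - Complex.I_mul_I
  rcases mul_eq_zero.mp hf with h | h
  · left
    rw [sub_eq_zero.mp h] at hall
    exact hall
  · right
    rw [← eq_neg_of_add_eq_zero_left h]
    exact hall
end

section
/- Let H be a complex Hilbert space with dim_ℂ H ≥ 2, and let S : H → H be a surjective ℝ-linear isometry (‖S(ψ)‖ = ‖ψ‖ for all ψ) that maps every complex line into a complex line (for every ξ ∈ H there exists α ∈ ℂ with S(iξ) = α·S(ξ)). Then S is either a unitary operator or an antiunitary operator on H. -/
open scoped InnerProductSpace

/-- A surjective real-linear isometry of a complex Hilbert space of dimension at least 2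
mapping complex lines into complex lines is unitary or antiunitary. -/
theorem real_isometry_line_preserving_unitary_or_antiunitary {H : Type*}
    [NormedAddCommGroup H] [InnerProductSpace ℂ H] [CompleteSpace H]
    (hdim : 2 ≤ Module.rank ℂ H) (S : H →ₗ[ℝ] H)
    (hsurj : Function.Surjective S) (hiso : ∀ ψ : H, ‖S ψ‖ = ‖ψ‖)
    (hline : ∀ ξ : H, ∃ α : ℂ, S (Complex.I • ξ) = α • S ξ) :
    IsUnitaryOp (S : H → H) ∨ IsAntiunitaryOp (S : H → H) := by
  have hre : ∀ x y : H, (⟪S x, S y⟫_ℂ).re = (⟪x, y⟫_ℂ).re := by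
    intro x y
    have h1 := norm_add_sq (𝕜 := ℂ) (S x) (S y)
    have h2 := norm_add_sq (𝕜 := ℂ) x y
    rw [← map_add, hiso, hiso, hiso] at h1
    simp only [RCLike.re_to_complex] at h1 h2
    linarith
  have him : ∀ x y : H, (⟪x, y⟫_ℂ).im = (⟪Complex.I • x, y⟫_ℂ).re := by
    intro x y
    rw [inner_smul_left]
    simp
  have hinj : Function.Injective S := by
    intro x y hxy
    have h := hiso (x - y)
    rw [map_sub, hxy, sub_self, norm_zero] at h
    exact sub_eq_zero.mp (norm_eq_zero.mp h.symm)
  have hdec : ∀ (c : ℂ) (x : H), S (c • x) = c.re • S x + c.im • S (Complex.I • x) := by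
    intro c x
    rw [← map_smul, ← map_smul, ← map_add]
    congr 1
    conv_lhs => rw [← Complex.re_add_im c]
    rw [add_smul, mul_smul, Complex.coe_smul, Complex.coe_smul]
  have hpt : ∀ x : H, S (Complex.I • x) = Complex.I • S x ∨
      S (Complex.I • x) = -(Complex.I • S x) := by
    intro x
    by_cases hx : x = 0
    · left; simp [hx]
    obtain ⟨α, hα⟩ := hline x
    have hx' : ‖x‖ ≠ 0 := norm_ne_zero_iff.mpr hx
    have hn : ‖α‖ = 1 := by
      have h := hiso (Complex.I • x)
      rw [hα, norm_smul, norm_smul, hiso, Complex.norm_I] at h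
      exact mul_right_cancel₀ hx' h
    have hr : α.re = 0 := by
      have h := hre x (Complex.I • x)
      rw [hα, inner_smul_right, inner_smul_right, inner_self_eq_norm_sq_to_K,
        inner_self_eq_norm_sq_to_K, hiso] at h
      have e : ((‖x‖ : ℂ)) ^ 2 = ((‖x‖ ^ 2 : ℝ) : ℂ) := by push_cast; rfl
      simp only [Complex.coe_algebraMap, e, Complex.re_mul_ofReal, Complex.I_re, zero_mul] at h
      exact (mul_eq_zero.mp h).resolve_right (pow_ne_zero 2 hx')
    have hq : α.im * α.im = 1 := by
      have h := Complex.normSq_eq_norm_sq α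
      rw [hn, Complex.normSq_apply, hr] at h
      linarith
    rcases mul_self_eq_one_iff.mp hq with h | h
    · left
      rw [hα, show α = Complex.I from Complex.ext (by simp [hr]) (by simp [h])]
    · right
      rw [hα, show α = -Complex.I from Complex.ext (by simp [hr]) (by simp [h]), neg_smul]
  have hglob : (∀ x : H, S (Complex.I • x) = Complex.I • S x) ∨
      (∀ x : H, S (Complex.I • x) = -(Complex.I • S x)) := by
    by_contra hcon
    push Not at hcon
    obtain ⟨⟨x, hx⟩, ⟨y, hy⟩⟩ := hcon
    have hx2 := (hpt x).resolve_left hx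
    have hy2 := (hpt y).resolve_right hy
    rcases hpt (x + y) with h | h
    · rw [smul_add, map_add, map_add, smul_add, hy2] at h
      exact hx (add_right_cancel h)
    · rw [smul_add, map_add, map_add, smul_add, hx2, neg_add] at h
      exact hy (add_left_cancel h)
  rcases hglob with h | h
  · left
    refine ⟨⟨hinj, hsurj⟩, map_add S, ?_, ?_⟩
    · intro c x
      rw [hdec, h]
      conv_rhs => rw [← Complex.re_add_im c]
      rw [add_smul, mul_smul, Complex.coe_smul, Complex.coe_smul]
    · intro x y
      apply Complex.ext (hre x y)
      rw [him, him, ← h, hre]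
  · right
    refine ⟨⟨hinj, hsurj⟩, map_add S, ?_, ?_⟩
    · intro c x
      rw [hdec, h]
      conv_rhs => rw [← Complex.re_add_im c]
      simp only [map_add, map_mul, Complex.conj_ofReal, Complex.conj_I]
      rw [add_smul, mul_smul, Complex.coe_smul, Complex.coe_smul, neg_smul]
    · intro x y
      apply Complex.ext
      · rw [hre, Complex.conj_re]
      · rw [Complex.conj_im, him, him, ← hre (Complex.I • x), h, inner_neg_left, Complex.neg_re,
          neg_neg]
end

section
/- Let H be a complex Hilbert space and define d : ℙH × ℙH → ℝ by d(L₁,L₂) = arccos(2·p(L₁,L₂) − 1), where p is the transition probability. Then d is a metric on ℙH: d(L₁,L₂) ≥ 0 with equality if and only if L₁ = L₂; d(L₁,L₂) = d(L₂,L₁); and d(L₁,L₃) ≤ d(L₁,L₂) + d(L₂,L₃) for all L₁, L₂, L₃ ∈ ℙH. -/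
open scoped InnerProductSpace

/-- The Fubini–Study distance `d(L₁, L₂) = arccos (2 p(L₁, L₂) - 1)`. -/
noncomputable def fsDist {H : Type*} [NormedAddCommGroup H] [InnerProductSpace ℂ H]
    (L₁ L₂ : Projectivization ℂ H) : ℝ :=
  Real.arccos (2 * transProb L₁ L₂ - 1)

/-- The normalized modulus of the inner product. -/
noncomputable def fsC {H : Type*} [NormedAddCommGroup H] [InnerProductSpace ℂ H] (x y : H) : ℝ :=
  ‖(⟪x, y⟫_ℂ)‖ / (‖x‖ * ‖y‖)

lemma fsC_nonneg {H : Type*} [NormedAddCommGroup H] [InnerProductSpace ℂ H] (x y : H) :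
    0 ≤ fsC x y := by unfold fsC; positivity

lemma fsC_le_one {H : Type*} [NormedAddCommGroup H] [InnerProductSpace ℂ H] (x y : H) :
    fsC x y ≤ 1 := div_le_one_of_le₀ (norm_inner_le_norm x y) (by positivity)

lemma fsC_comm {H : Type*} [NormedAddCommGroup H] [InnerProductSpace ℂ H] (x y : H) :
    fsC x y = fsC y x := by
  unfold fsC; rw [norm_inner_symm, mul_comm]

lemma fsDist_eq {H : Type*} [NormedAddCommGroup H] [InnerProductSpace ℂ H]
    (L₁ L₂ : Projectivization ℂ H) :
    fsDist L₁ L₂ = 2 * Real.arccos (fsC L₁.rep L₂.rep) := by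
  have h0 := fsC_nonneg L₁.rep L₂.rep
  have h1 := fsC_le_one L₁.rep L₂.rep
  have hp : transProb L₁ L₂ = fsC L₁.rep L₂.rep ^ 2 := by
    unfold transProb fsC; rw [div_pow, mul_pow]
  have h2 : Real.arccos (fsC L₁.rep L₂.rep) ≤ Real.pi / 2 := Real.arccos_le_pi_div_two.2 h0
  have h3 := Real.arccos_nonneg (fsC L₁.rep L₂.rep)
  unfold fsDist
  rw [hp, ← Real.arccos_cos (x := 2 * Real.arccos (fsC L₁.rep L₂.rep)) (by linarith)
    (by linarith), Real.cos_two_mul, Real.cos_arccos (by linarith) h1]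

lemma arccos_fsC_triangle {H : Type*} [NormedAddCommGroup H] [InnerProductSpace ℂ H]
    (x y z : H) :
    Real.arccos (fsC x z) ≤ Real.arccos (fsC x y) + Real.arccos (fsC y z) := by
  letI : InnerProductSpace ℝ H := InnerProductSpace.complexToReal
  obtain ⟨u, hu, hu'⟩ := RCLike.exists_norm_eq_mul_self (⟪y, x⟫_ℂ)
  obtain ⟨w, hw, hw'⟩ := RCLike.exists_norm_eq_mul_self (⟪y, z⟫_ℂ)
  have key := InnerProductGeometry.angle_le_angle_add_angle (u • x) y (w • z)
  have hre : ∀ a b : H, ⟪a, b⟫_ℝ = (⟪a, b⟫_ℂ).re := fun a b => rfl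
  have e1 : InnerProductGeometry.angle (u • x) y = Real.arccos (fsC x y) := by
    rw [InnerProductGeometry.angle_comm, fsC_comm]
    unfold InnerProductGeometry.angle fsC
    rw [hre, inner_smul_right, ← hu', norm_smul, hu, one_mul]
    simp
  have e2 : InnerProductGeometry.angle y (w • z) = Real.arccos (fsC y z) := by
    unfold InnerProductGeometry.angle fsC
    rw [hre, inner_smul_right, ← hw', norm_smul, hw, one_mul]
    simp
  have e3 : Real.arccos (fsC x z) ≤ InnerProductGeometry.angle (u • x) (w • z) := by
    unfold InnerProductGeometry.angle fsC
    apply Real.arccos_le_arccos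
    rw [hre, norm_smul, norm_smul, hu, hw, one_mul, one_mul]
    gcongr
    refine (Complex.re_le_norm _).trans ?_
    rw [inner_smul_right, inner_smul_left]
    simp [hu, hw]
  linarith

/-- `d(L₁,L₂) = arccos (2 p(L₁,L₂) - 1)` is a metric on projective Hilbert space:
nonnegative, vanishing exactly on the diagonal, symmetric, and satisfying the
triangle inequality. -/
theorem fsDist_is_metric {H : Type*} [NormedAddCommGroup H] [InnerProductSpace ℂ H]
    [CompleteSpace H] :
    (∀ L₁ L₂ : Projectivization ℂ H, 0 ≤ fsDist L₁ L₂) ∧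
    (∀ L₁ L₂ : Projectivization ℂ H, fsDist L₁ L₂ = 0 ↔ L₁ = L₂) ∧
    (∀ L₁ L₂ : Projectivization ℂ H, fsDist L₁ L₂ = fsDist L₂ L₁) ∧
    (∀ L₁ L₂ L₃ : Projectivization ℂ H, fsDist L₁ L₃ ≤ fsDist L₁ L₂ + fsDist L₂ L₃) := by
  refine ⟨fun _ _ => Real.arccos_nonneg _, fun L₁ L₂ => ?_, fun L₁ L₂ => ?_,
    fun L₁ L₂ L₃ => ?_⟩
  · have n1 := norm_pos_iff.2 L₁.rep_nonzero
    have n2 := norm_pos_iff.2 L₂.rep_nonzero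
    rw [fsDist_eq]
    constructor
    · intro h
      have h1 : Real.arccos (fsC L₁.rep L₂.rep) = 0 := by linarith
      rw [Real.arccos_eq_zero] at h1
      have h2 : fsC L₁.rep L₂.rep = 1 := le_antisymm (fsC_le_one _ _) h1
      unfold fsC at h2
      rw [div_eq_one_iff_eq (by positivity)] at h2
      obtain ⟨r, -, h3⟩ := (norm_inner_eq_norm_iff L₁.rep_nonzero L₂.rep_nonzero).1 h2
      rw [← L₁.mk_rep, ← L₂.mk_rep, eq_comm, Projectivization.mk_eq_mk_iff']
      exact ⟨r, h3.symm⟩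
    · rintro rfl
      have : fsC L₁.rep L₁.rep = 1 := by
        unfold fsC
        rw [inner_self_eq_norm_sq_to_K]
        simp only [norm_pow, Complex.coe_algebraMap, Complex.norm_real, norm_norm]
        field_simp
      rw [this]; simp
  · rw [fsDist_eq, fsDist_eq, fsC_comm]
  · rw [fsDist_eq, fsDist_eq, fsDist_eq]
    linarith [arccos_fsC_triangle L₁.rep L₂.rep L₃.rep]
end

section
/- Let H be a complex Hilbert space with dim_ℂ H ≥ 2, and let S and S′ each be either a unitary or an antiunitary operator on H. If S and S′ induce the same map on projective space, i.e. ℂ·S(ψ) = ℂ·S′(ψ) for every nonzero ψ ∈ H, then S′ = c·S for some scalar c ∈ ℂ with |c| = 1; in particular S and S′ are of the same type (both unitary or both antiunitary). -/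
open scoped InnerProductSpace

theorem phase_aux_step {H : Type*} [AddCommGroup H] [Module ℂ H] (T : H → H)
    (hadd : ∀ x y, T (x + y) = T x + T y) (hT : ∀ x, ∃ c : ℂ, T x = c • x)
    (x y : H) (hx : x ≠ 0) (hy : y ∉ Submodule.span ℂ {x}) (a : ℂ) (ha : T x = a • x) :
    T y = a • y := by
  obtain ⟨b, hb⟩ := hT y
  obtain ⟨d, hd⟩ := hT (x + y)
  have h1 : (d - b) • y = (a - d) • x := by
    have h := hadd x y
    rw [hd, ha, hb, smul_add] at h
    rw [sub_smul, sub_smul, sub_eq_sub_iff_add_eq_add, ← h, add_comm]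
  have hdb : d - b = 0 := by
    by_contra hne
    apply hy
    rw [Submodule.mem_span_singleton]
    refine ⟨(d - b)⁻¹ * (a - d), ?_⟩
    rw [mul_smul, ← h1, smul_smul, inv_mul_cancel₀ hne, one_smul]
  rw [hdb, zero_smul] at h1
  have had : a - d = 0 := (smul_eq_zero.mp h1.symm).resolve_right hx
  rw [hb, ← sub_eq_zero.mp hdb, ← sub_eq_zero.mp had]

theorem phase_aux {H : Type*} [AddCommGroup H] [Module ℂ H] (hdim : 2 ≤ Module.rank ℂ H)
    (T : H → H)
    (hadd : ∀ x y, T (x + y) = T x + T y) (hT : ∀ x, ∃ c : ℂ, T x = c • x) :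
    (∃ x : H, x ≠ 0) ∧ ∃ c : ℂ, ∀ x, T x = c • x := by
  have hspan : ∀ x : H, ∃ y, y ∉ Submodule.span ℂ {x} := by
    intro x
    by_contra! h
    have htop : Submodule.span ℂ {x} = ⊤ := Submodule.eq_top_iff'.mpr h
    have h1 : Module.rank ℂ (Submodule.span ℂ {x}) ≤ 1 :=
      (rank_span_le _).trans (by simp)
    rw [htop, rank_top] at h1
    have h2 := hdim.trans h1
    norm_num at h2
  obtain ⟨x, hx⟩ := hspan 0
  have hx0 : x ≠ 0 := by
    rintro rfl
    exact hx (Submodule.zero_mem _)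
  obtain ⟨y, hy⟩ := hspan x
  have hy0 : y ≠ 0 := by
    rintro rfl
    exact hy (Submodule.zero_mem _)
  obtain ⟨a, ha⟩ := hT x
  have hya := phase_aux_step T hadd hT x y hx0 hy a ha
  refine ⟨⟨x, hx0⟩, a, fun z => ?_⟩
  by_cases hz : z ∈ Submodule.span ℂ {x}
  · by_cases hz' : z ∈ Submodule.span ℂ {y}
    · have hz0 : z = 0 := by
        by_contra hne
        obtain ⟨p, rfl⟩ := Submodule.mem_span_singleton.mp hz'
        have hp : p ≠ 0 := by
          rintro rfl
          simp at hne
        exact hy (((Submodule.span ℂ {x}).smul_mem_iff hp).mp hz)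
      obtain ⟨c, hc⟩ := hT z
      rw [hc, hz0, smul_zero, smul_zero]
    · exact phase_aux_step T hadd hT y z hy0 hz' a hya
  · exact phase_aux_step T hadd hT x z hx0 hz a ha

theorem phase_aux_norm {H : Type*} [NormedAddCommGroup H] [InnerProductSpace ℂ H] {S : H → H}
    (hS : IsUnitaryOp S ∨ IsAntiunitaryOp S) (x : H) : ‖S x‖ = ‖x‖ := by
  have h : ⟪S x, S x⟫_ℂ = ⟪x, x⟫_ℂ := by
    rcases hS with h | h
    · exact h.2.2.2 x x
    · rw [h.2.2.2 x x, inner_conj_symm]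
  rw [inner_self_eq_norm_sq_to_K, inner_self_eq_norm_sq_to_K] at h
  have h' : ‖S x‖ ^ 2 = ‖x‖ ^ 2 := by exact_mod_cast h
  exact (sq_eq_sq₀ (norm_nonneg _) (norm_nonneg _)).mp h'

theorem phase_aux_I {H : Type*} [AddCommGroup H] [Module ℂ H] (v : H)
    (h : Complex.I • v = -(Complex.I • v)) : v = 0 := by
  have h2 : (2 * Complex.I) • v = 0 := by
    rw [two_mul, add_smul]
    nth_rewrite 1 [h]
    simp
  exact (smul_eq_zero.mp h2).resolve_left (by simp)

/-- Two unitary-or-antiunitary operators inducing the same map on projective space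
differ by a unit-modulus scalar; in particular they are of the same type. -/
theorem eq_up_to_phase_of_same_projective_action {H : Type*} [NormedAddCommGroup H]
    [InnerProductSpace ℂ H] [CompleteSpace H] (hdim : 2 ≤ Module.rank ℂ H)
    (S S' : H → H)
    (hS : IsUnitaryOp S ∨ IsAntiunitaryOp S) (hS' : IsUnitaryOp S' ∨ IsAntiunitaryOp S')
    (hsame : ∀ ψ : H, ψ ≠ 0 →
      Submodule.span ℂ {S ψ} = Submodule.span ℂ {S' ψ}) :
    ∃ c : ℂ, ‖c‖ = 1 ∧ (∀ ψ : H, S' ψ = c • S ψ) ∧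
      ((IsUnitaryOp S ∧ IsUnitaryOp S') ∨ (IsAntiunitaryOp S ∧ IsAntiunitaryOp S')) := by
  have hbij : Function.Bijective S := hS.elim (fun h => h.1) (fun h => h.1)
  have hadd : ∀ x y, S (x + y) = S x + S y := hS.elim (fun h => h.2.1) (fun h => h.2.1)
  have hadd' : ∀ x y, S' (x + y) = S' x + S' y := hS'.elim (fun h => h.2.1) (fun h => h.2.1)
  let g := Function.surjInv hbij.2
  have hg : ∀ x, S (g x) = x := Function.surjInv_eq hbij.2
  have hgS : ∀ x, g (S x) = x := fun x => hbij.1 (hg (S x))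
  have hgadd : ∀ x y, g (x + y) = g x + g y := fun x y => hbij.1 (by rw [hadd, hg, hg, hg])
  have h0 : S' 0 = 0 := by
    have h := phase_aux_norm hS' 0
    rwa [norm_zero, norm_eq_zero] at h
  obtain ⟨⟨x, hx⟩, c, hc⟩ := phase_aux hdim (fun x => S' (g x))
    (fun x y => by simp only [hgadd, hadd']) (fun x => by
      by_cases h : g x = 0
      · refine ⟨0, ?_⟩
        simp only [h, h0, zero_smul]
      · have h1 : S' (g x) ∈ Submodule.span ℂ {S (g x)} := by
          rw [hsame _ h]
          exact Submodule.mem_span_singleton_self _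
        rw [hg] at h1
        obtain ⟨c, hc⟩ := Submodule.mem_span_singleton.mp h1
        exact ⟨c, hc.symm⟩)
  have key : ∀ ψ, S' ψ = c • S ψ := fun ψ => by
    have h := hc (S ψ)
    simpa only [hgS] using h
  have hS'x : S' x ≠ 0 := by
    intro h
    apply hx
    rw [← norm_eq_zero, ← phase_aux_norm hS' x, h, norm_zero]
  refine ⟨c, ?_, key, ?_⟩
  · have h := congrArg norm (key x)
    rw [norm_smul, phase_aux_norm hS, phase_aux_norm hS'] at h
    have hx' : ‖x‖ ≠ 0 := norm_ne_zero_iff.mpr hx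
    exact (mul_right_cancel₀ hx' (by rw [one_mul]; exact h)).symm
  · have hk := key (Complex.I • x)
    rcases hS with hU | hA <;> rcases hS' with hU' | hA'
    · exact Or.inl ⟨hU, hU'⟩
    · exfalso
      rw [hU.2.2.1, hA'.2.2.1, smul_comm, ← key, Complex.conj_I, neg_smul] at hk
      exact hS'x (phase_aux_I _ hk.symm)
    · exfalso
      rw [hA.2.2.1, hU'.2.2.1, smul_comm, ← key, Complex.conj_I, neg_smul] at hk
      exact hS'x (phase_aux_I _ hk)
    · exact Or.inr ⟨hA, hA'⟩
end
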